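/- For every t > 0, every v₀ > 0 and every λ > 0, one has ∫_{(0,v₀]} (e^{λv} − 1 − λv) μ^{ℓ,r}_t(dv) ≤ (D₃ + 3·D₄)·t·v₀^{−γ}·e^{λv₀}, where D₃ := 2^γ·E[R^γ]/(γ(γ−1)) and D₄ := 2^{γ−1}·E[R^γ]/(γ(γ−1)(2−γ)). -/

import Mathlib

open MeasureTheory Filter Set
open scoped ENNReal NNReal Topology

noncomputable section

/-- `ℓ_t(s,u)`: the length of the interval `[s,s+u] ∩ [0,t]`. -/
def ellK (t s u : ℝ) : ℝ := max 0 (min (s + u) t - max s 0)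

/-- The intensity measure `u^{-γ-1} du` on `(0,∞)`. -/
def muU (γ : ℝ) : Measure ℝ :=
  (volume.restrict (Set.Ioi 0)).withDensity fun u => ENNReal.ofReal (u ^ (-γ - 1))

/-- The measure `μ^ℓ_t` on `(0,∞)`:
`μ^ℓ_t(A) = ∫_ℝ ∫_0^∞ 1{ℓ_t(s,u) ∈ A} u^{-γ-1} du ds`. -/
def muEll (γ t : ℝ) : Measure ℝ :=
  (Measure.map (fun p : ℝ × ℝ => ellK t p.1 p.2)
    ((volume : Measure ℝ).prod (muU γ))).restrict (Set.Ioi 0)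

/-- The measure `μ^{ℓ,r}_t` on `(0,∞)`:
`μ^{ℓ,r}_t(A) = ∫_{(0,∞)} ∫_{(0,∞)} 1{rℓ ∈ A} μ^ℓ_t(dℓ) F_R(dr)`. -/
def muEllR (γ t : ℝ) (FR : Measure ℝ) : Measure ℝ :=
  (Measure.map (fun p : ℝ × ℝ => p.1 * p.2) (FR.prod (muEll γ t))).restrict (Set.Ioi 0)

/-- The measure `ν` on `[0,1]`: density `s^{-(γ+1)} + ((2-γ)/γ)·s^{-γ}` on `(0,1)` with
respect to Lebesgue measure, together with an atom of mass `1/(γ(γ-1))` at the point `1`. -/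
def nuM (γ : ℝ) : Measure ℝ :=
  (volume.restrict (Set.Ioo 0 1)).withDensity
      (fun s => ENNReal.ofReal (s ^ (-(γ + 1)) + (2 - γ) / γ * s ^ (-γ)))
    + (Real.toNNReal (1 / (γ * (γ - 1)))) • Measure.dirac 1

instance nuM.sigmaFinite (γ : ℝ) : SigmaFinite (nuM γ) := by
  unfold nuM; infer_instance

end

lemma aux_exp (c a : ℝ) (hc : 0 ≤ c) (hc1 : c ≤ 1) (ha : 0 ≤ a) :
    Real.exp (c * a) - 1 - c * a ≤ c ^ 2 * Real.exp a := by
  have key : ∀ y : ℝ, HasSum (fun n : ℕ => y ^ (n + 2) / ((n + 2).factorial : ℝ))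
      (Real.exp y - 1 - y) := by
    intro y
    have h := NormedSpace.expSeries_div_hasSum_exp (𝔸 := ℝ) y
    rw [← Real.exp_eq_exp_ℝ] at h
    have h2 := (hasSum_nat_add_iff' 2).2 h
    simpa [Finset.sum_range_succ, sub_sub] using h2
  have h1 : Real.exp (c * a) - 1 - c * a ≤ c ^ 2 * (Real.exp a - 1 - a) := by
    refine hasSum_le (fun n => ?_) (key (c * a)) ((key a).mul_left (c ^ 2))
    have : (c * a) ^ (n + 2) ≤ c ^ 2 * a ^ (n + 2) := by
      rw [mul_pow]
      gcongr ?_ * _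
      exact pow_le_pow_of_le_one hc hc1 (by omega)
    rw [← mul_div_assoc]
    gcongr
  nlinarith [sq_nonneg c]

lemma aux_rpow (a y : ℝ) (ha : a < -1) (hy : 0 < y) :
    ∫⁻ u in Ioi y, ENNReal.ofReal (u ^ a) = ENNReal.ofReal (-y ^ (a + 1) / (a + 1)) := by
  rw [← integral_Ioi_rpow_of_lt ha hy, ofReal_integral_eq_lintegral_ofReal]
  · exact integrableOn_Ioi_rpow_of_lt ha hy
  · filter_upwards [ae_restrict_mem measurableSet_Ioi] with u hu
    exact Real.rpow_nonneg (hy.trans hu).le _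

lemma aux_muU (γ : ℝ) (hγ1 : 1 < γ) (y : ℝ) (hy : 0 < y) :
    muU γ (Ioi y) = ENNReal.ofReal (y ^ (-γ) / γ) := by
  unfold muU
  rw [withDensity_apply _ measurableSet_Ioi, Measure.restrict_restrict measurableSet_Ioi,
    inter_eq_left.2 (Ioi_subset_Ioi hy.le), aux_rpow _ _ (by linarith) hy]
  congr 1
  rw [sub_add_cancel, neg_div_neg_eq]

lemma aux_ellK_meas (t : ℝ) : Measurable (fun p : ℝ × ℝ => ellK t p.1 p.2) := by
  unfold ellK
  fun_prop

instance aux_sf1 (γ : ℝ) : SFinite (muU γ) := by unfold muU; infer_instance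
instance aux_sf2 (γ t : ℝ) : SFinite (muEll γ t) := by unfold muEll; infer_instance

lemma aux_tail (γ : ℝ) (hγ1 : 1 < γ) (hγ2 : γ < 2) (t : ℝ) (x : ℝ) (hx : 0 < x) (ht : 0 < t) :
    muEll γ t (Ioi x) ≤ ENNReal.ofReal (1 / (γ * (γ - 1)) * t * x ^ (-γ)) := by
  have hms : MeasurableSet ((fun p : ℝ × ℝ => ellK t p.1 p.2) ⁻¹' Ioi x) :=
    aux_ellK_meas t measurableSet_Ioi
  unfold muEll
  rw [Measure.restrict_apply measurableSet_Ioi, inter_eq_left.2 (Ioi_subset_Ioi hx.le),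
    Measure.map_apply (aux_ellK_meas t) measurableSet_Ioi, Measure.prod_apply hms]
  have hsec : ∀ s : ℝ, (muU γ) (Prod.mk s ⁻¹' ((fun p : ℝ × ℝ => ellK t p.1 p.2) ⁻¹' Ioi x))
      ≤ (Iic 0).indicator (fun s => (Ici x).indicator
          (fun y => ENNReal.ofReal (y ^ (-γ) / γ)) (x - s)) s
        + (Ioo 0 (t - x)).indicator (fun _ => ENNReal.ofReal (x ^ (-γ) / γ)) s := by
    intro s
    rcases le_or_gt s 0 with hs | hs
    · refine le_trans ?_ le_self_add
      rw [indicator_of_mem (by exact hs), indicator_of_mem (by simpa using hs),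
        ← aux_muU γ hγ1 _ (by linarith)]
      refine measure_mono ?_
      intro u hu
      simp only [mem_preimage, mem_Ioi, ellK, max_eq_right hs] at hu ⊢
      rcases lt_max_iff.1 hu with h | h
      · linarith
      · have := min_le_left (s + u) t
        linarith
    · refine le_trans ?_ le_add_self
      by_cases hst : s < t - x
      · rw [indicator_of_mem (by exact ⟨hs, hst⟩), ← aux_muU γ hγ1 _ hx]
        refine measure_mono ?_
        intro u hu
        simp only [mem_preimage, mem_Ioi, ellK, max_eq_left hs.le] at hu ⊢
        rcases lt_max_iff.1 hu with h | h
        · linarith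
        · have := min_le_left (s + u) t
          linarith
      · have : Prod.mk s ⁻¹' ((fun p : ℝ × ℝ => ellK t p.1 p.2) ⁻¹' Ioi x) = ∅ := by
          ext u
          simp only [mem_preimage, mem_Ioi, ellK, max_eq_left hs.le, mem_empty_iff_false, iff_false]
          intro hu
          rcases lt_max_iff.1 hu with h | h
          · linarith
          · have := min_le_right (s + u) t
            linarith
        rw [this]; simp
  rcases le_or_gt t x with htx | htx
  · have : ((fun p : ℝ × ℝ => ellK t p.1 p.2) ⁻¹' Ioi x) = ∅ := by
      ext p
      simp only [mem_preimage, mem_Ioi, ellK, mem_empty_iff_false, iff_false]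
      intro hu
      rcases lt_max_iff.1 hu with h | h
      · linarith
      · have := min_le_right (p.1 + p.2) t
        have := le_max_right p.1 0
        linarith
    rw [this]; simp
  have hg : 0 < γ - 1 := by linarith
  have hg0 : 0 < γ := by linarith
  have hxg : 0 < x ^ (-γ) := Real.rpow_pos_of_pos hx _
  calc _ ≤ ∫⁻ s : ℝ, ((Ici x).indicator
          (fun y => ENNReal.ofReal (y ^ (-γ) / γ)) (x - s))
        + (Ioo 0 (t - x)).indicator (fun _ => ENNReal.ofReal (x ^ (-γ) / γ)) s := by
        refine lintegral_mono fun s => (hsec s).trans ?_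
        gcongr
        exact indicator_le_self _ _ _
    _ = ENNReal.ofReal (x ^ (-γ + 1) / (γ - 1) / γ)
        + ENNReal.ofReal (x ^ (-γ) / γ * (t - x)) := by
        rw [lintegral_add_right _ (by
          exact measurable_const.indicator measurableSet_Ioo)]
        rw [lintegral_sub_left_eq_self (fun y => (Ici x).indicator
          (fun y => ENNReal.ofReal (y ^ (-γ) / γ)) y) x]
        rw [lintegral_indicator measurableSet_Ici, lintegral_indicator measurableSet_Ioo,
          setLIntegral_const, Real.volume_Ioo, sub_zero, ← ENNReal.ofReal_mul (by positivity),
          setLIntegral_congr Ioi_ae_eq_Ici.symm]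
        congr 1
        simp_rw [div_eq_mul_inv _ γ, ENNReal.ofReal_mul' (inv_pos.2 hg0).le]
        rw [lintegral_mul_const' _ _ ENNReal.ofReal_ne_top, aux_rpow _ _ (by linarith) hx]
        congr 2
        rw [← neg_div_neg_eq]
        congr 1 <;> ring
    _ ≤ _ := by
        rw [← ENNReal.ofReal_add (by positivity) (by
          have : 0 < t - x := by linarith
          positivity)]
        apply ENNReal.ofReal_le_ofReal
        rw [Real.rpow_add_one hx.ne']
        have e : 1 / (γ * (γ - 1)) * t * x ^ (-γ)
            - (x ^ (-γ) * x / (γ - 1) / γ + x ^ (-γ) / γ * (t - x))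
            = x ^ (-γ) * (t - x) * (2 - γ) / (γ * (γ - 1)) := by
          field_simp
          ring
        have : 0 ≤ x ^ (-γ) * (t - x) * (2 - γ) / (γ * (γ - 1)) := by
          have : 0 < t - x := by linarith
          have : 0 < 2 - γ := by linarith
          positivity
        linarith

lemma aux_tailR (γ : ℝ) (hγ1 : 1 < γ) (hγ2 : γ < 2)
    (FR : Measure ℝ) [IsProbabilityMeasure FR] (hFRpos : FR (Set.Iic 0) = 0)
    (hmom : Integrable (fun r => r ^ γ) FR)
    (t : ℝ) (ht : 0 < t) (x : ℝ) (hx : 0 < x) :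
    muEllR γ t FR (Ioi x)
      ≤ ENNReal.ofReal (1 / (γ * (γ - 1)) * t * (∫ r, r ^ γ ∂FR) * x ^ (-γ)) := by
  have hg : 0 < γ - 1 := by linarith
  have hg0 : 0 < γ := by linarith
  have hpos : ∀ᵐ r ∂FR, 0 < r := by
    rw [ae_iff]; simpa [Iic] using hFRpos
  have hm : Measurable (fun p : ℝ × ℝ => p.1 * p.2) := by fun_prop
  unfold muEllR
  rw [Measure.restrict_apply measurableSet_Ioi, inter_eq_left.2 (Ioi_subset_Ioi hx.le),
    Measure.map_apply hm measurableSet_Ioi, Measure.prod_apply (hm measurableSet_Ioi)]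
  calc _ ≤ ∫⁻ r, ENNReal.ofReal (1 / (γ * (γ - 1)) * t * x ^ (-γ) * r ^ γ) ∂FR := by
        refine lintegral_mono_ae ?_
        filter_upwards [hpos] with r hr
        have : Prod.mk r ⁻¹' ((fun p : ℝ × ℝ => p.1 * p.2) ⁻¹' Ioi x) = Ioi (x / r) := by
          ext y
          simp only [mem_preimage, mem_Ioi, div_lt_iff₀ hr, mul_comm]
        rw [this]
        refine (aux_tail γ hγ1 hγ2 t (x / r) (by positivity) ht).trans (le_of_eq ?_)
        rw [Real.div_rpow hx.le hr.le, Real.rpow_neg hr.le, div_inv_eq_mul, mul_assoc _ _ (r ^ γ)]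
    _ = _ := by
        rw [← ofReal_integral_eq_lintegral_ofReal (hmom.const_mul _), integral_const_mul]
        · congr 1; ring
        · filter_upwards [hpos] with r hr
          simp only [Pi.zero_apply]
          positivity

lemma aux_sq (γ : ℝ) (hγ1 : 1 < γ) (hγ2 : γ < 2) (μ : Measure ℝ) (K : ℝ) (hK : 0 ≤ K)
    (h : ∀ x, 0 < x → μ (Ioi x) ≤ ENNReal.ofReal (K * x ^ (-γ))) (v0 : ℝ) (hv0 : 0 < v0) :
    ∫⁻ v in Ioc 0 v0, ENNReal.ofReal (v ^ (2:ℝ)) ∂μ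
      ≤ ENNReal.ofReal (2 * K / (2 - γ) * v0 ^ (2 - γ)) := by
  have hnn : 0 ≤ᵐ[μ.restrict (Ioc 0 v0)] (fun v : ℝ => v) := by
    filter_upwards [ae_restrict_mem measurableSet_Ioc] with v hv
    exact hv.1.le
  have h2 : 0 < 2 - γ := by linarith
  rw [lintegral_rpow_eq_lintegral_meas_lt_mul _ hnn aemeasurable_id (by norm_num)]
  have hint : IntegrableOn (fun x : ℝ => x ^ (1 - γ)) (Ioc 0 v0) := by
    rw [← intervalIntegrable_iff_integrableOn_Ioc_of_le hv0.le]
    exact intervalIntegral.intervalIntegrable_rpow' (by linarith)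
  calc _ ≤ ENNReal.ofReal 2 * ∫⁻ x in Ioi (0:ℝ), (Ioc 0 v0).indicator
          (fun x => ENNReal.ofReal (K * x ^ (1 - γ))) x := by
        gcongr ENNReal.ofReal 2 * ?_
        refine setLIntegral_mono_ae' measurableSet_Ioi (Eventually.of_forall fun x hx => ?_)
        have hx : 0 < x := hx
        have hIoi : {a : ℝ | x < a} = Ioi x := rfl
        rw [hIoi, Measure.restrict_apply measurableSet_Ioi]
        by_cases hxv : x ≤ v0
        · rw [indicator_of_mem (by exact ⟨hx, hxv⟩)]
          calc _ ≤ ENNReal.ofReal (K * x ^ (-γ)) * ENNReal.ofReal (x ^ ((2:ℝ) - 1)) := by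
                gcongr
                exact (measure_mono inter_subset_left).trans (h x hx)
            _ = _ := by
                rw [← ENNReal.ofReal_mul (by positivity), mul_assoc, ← Real.rpow_add hx]
                congr 3; ring
        · have : Ioi x ∩ Ioc 0 v0 = ∅ := by
            ext y
            simp only [mem_inter_iff, mem_Ioi, mem_Ioc, mem_empty_iff_false, iff_false]
            rintro ⟨a, b, c⟩
            linarith
          rw [this]; simp
    _ = _ := by
        rw [setLIntegral_indicator measurableSet_Ioc, inter_eq_left.2 Ioc_subset_Ioi_self,
          ← ofReal_integral_eq_lintegral_ofReal (hint.const_mul K),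
          ← intervalIntegral.integral_of_le hv0.le, intervalIntegral.integral_const_mul,
          integral_rpow (Or.inl (by linarith)), ← ENNReal.ofReal_mul (by norm_num)]
        · congr 1
          have e : 1 - γ + 1 = 2 - γ := by ring
          rw [e, Real.zero_rpow h2.ne']
          ring
        · filter_upwards [ae_restrict_mem measurableSet_Ioc] with v hv
          have := hv.1
          simp only [Pi.zero_apply]
          positivity

/-- For every `t > 0`, `v₀ > 0`, `λ > 0`:
`∫_{(0,v₀]} (e^{λv} - 1 - λv) μ^{ℓ,r}_t(dv) ≤ (D₃ + 3 D₄)·t·v₀^{-γ}·e^{λ v₀}`,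
where `D₃ = 2^γ E[R^γ]/(γ(γ-1))` and `D₄ = 2^{γ-1} E[R^γ]/(γ(γ-1)(2-γ))`. -/
theorem stmt_14 (γ : ℝ) (hγ1 : 1 < γ) (hγ2 : γ < 2)
    (FR : Measure ℝ) [IsProbabilityMeasure FR] (hFRpos : FR (Set.Iic 0) = 0)
    (hmom : Integrable (fun r => r ^ γ) FR)
    (t : ℝ) (ht : 0 < t) (v0 : ℝ) (hv0 : 0 < v0) (l : ℝ) (hl : 0 < l) :
    ∫⁻ v in Set.Ioc 0 v0, ENNReal.ofReal (Real.exp (l * v) - 1 - l * v) ∂(muEllR γ t FR)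
      ≤ ENNReal.ofReal
          ((2 ^ γ * (∫ r, r ^ γ ∂FR) / (γ * (γ - 1))
              + 3 * (2 ^ (γ - 1) * (∫ r, r ^ γ ∂FR) / (γ * (γ - 1) * (2 - γ))))
            * t * v0 ^ (-γ) * Real.exp (l * v0)) := by
  set M := ∫ r, r ^ γ ∂FR with hM
  have hg : 0 < γ - 1 := by linarith
  have hg0 : 0 < γ := by linarith
  have h2 : 0 < 2 - γ := by linarith
  have hpos : ∀ᵐ r ∂FR, 0 < r := by
    rw [ae_iff]; simpa [Iic] using hFRpos
  have hM0 : 0 ≤ M := by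
    refine integral_nonneg_of_ae ?_
    filter_upwards [hpos] with r hr
    exact Real.rpow_nonneg hr.le _
  have hsq := aux_sq γ hγ1 hγ2 (muEllR γ t FR) (1 / (γ * (γ - 1)) * t * M) (by positivity)
    (fun x hx => aux_tailR γ hγ1 hγ2 FR hFRpos hmom t ht x hx) v0 hv0
  calc _ ≤ ∫⁻ v in Ioc 0 v0, ENNReal.ofReal (Real.exp (l * v0) / v0 ^ 2)
          * ENNReal.ofReal (v ^ (2:ℝ)) ∂(muEllR γ t FR) := by
        refine setLIntegral_mono_ae' measurableSet_Ioc (Eventually.of_forall fun v hv => ?_)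
        rw [← ENNReal.ofReal_mul (by positivity)]
        apply ENNReal.ofReal_le_ofReal
        have := aux_exp (v / v0) (l * v0) (div_nonneg hv.1.le hv0.le)
          ((div_le_one hv0).2 hv.2) (by positivity)
        have e : v / v0 * (l * v0) = l * v := by field_simp
        rw [e] at this
        refine this.trans (le_of_eq ?_)
        rw [Real.rpow_two]
        field_simp
    _ ≤ ENNReal.ofReal (Real.exp (l * v0) / v0 ^ 2) *
          ENNReal.ofReal (2 * (1 / (γ * (γ - 1)) * t * M) / (2 - γ) * v0 ^ (2 - γ)) := by
        rw [lintegral_const_mul' _ _ ENNReal.ofReal_ne_top]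
        gcongr
    _ ≤ _ := by
        rw [← ENNReal.ofReal_mul (by positivity)]
        apply ENNReal.ofReal_le_ofReal
        have e : v0 ^ (2 - γ) = v0 ^ 2 * v0 ^ (-γ) := by
          rw [sub_eq_add_neg, Real.rpow_add hv0, Real.rpow_two]
        have h1 : (1:ℝ) ≤ 2 ^ (γ - 1) := Real.one_le_rpow (by norm_num) hg.le
        have h3 : (0:ℝ) < 2 ^ γ := by positivity
        have hv : 0 < v0 ^ (-γ) := by positivity
        rw [e]
        have e2 : Real.exp (l * v0) / v0 ^ 2 *
            (2 * (1 / (γ * (γ - 1)) * t * M) / (2 - γ) * (v0 ^ 2 * v0 ^ (-γ)))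
            = (2 / (2 - γ)) * (M / (γ * (γ - 1)) * t * v0 ^ (-γ) * Real.exp (l * v0)) := by
          field_simp
        have e3 : (2 ^ γ * M / (γ * (γ - 1))
              + 3 * (2 ^ (γ - 1) * M / (γ * (γ - 1) * (2 - γ)))) * t * v0 ^ (-γ)
              * Real.exp (l * v0)
            = (2 ^ γ + 3 * 2 ^ (γ - 1) / (2 - γ))
              * (M / (γ * (γ - 1)) * t * v0 ^ (-γ) * Real.exp (l * v0)) := by
          field_simp
        rw [e2, e3]
        gcongr
        have : 2 / (2 - γ) ≤ 3 * 2 ^ (γ - 1) / (2 - γ) := by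
          gcongr
          linarith
        linarith
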